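/- Let N ≥ 2, V > 0, κ > 0, τ > 0, and for i = 1,…,N let φ_i ≥ 0, μ_i > 0, q_i ≥ 0, and assume Σ_i φ_i < μ_j for every j and τ·Σ_i φ_i < 1. For each i let B_i = { β_{i·} ∈ ℝ^N : β_{ij} ≥ 0 for all j, Σ_j β_{ij} = φ_i }, and for β ∈ ∏_i B_i define ω_j(β) = Σ_k β_{kj}, λ(β) = Σ_k Σ_{j≠k} β_{kj}, and the cost of SBS i as C_i(β) = β_{ii}·( V/(μ_i − ω_i(β)) + κ q_i ) + Σ_{j≠i} β_{ij}·( V/(μ_j − ω_j(β)) + V·τ/(1 − τ·λ(β)) ). Then there exists β^{NE} ∈ ∏_i B_i such that for every i and every β′_{i·} ∈ B_i, C_i(β^{NE}) ≤ C_i(β^{NE}_{1·},…,β′_{i·},…,β^{NE}_{N·}); i.e., the SBS peer offloading game admits at least one Nash equilibrium. -/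

import Mathlib

/-!
Brouwer's theorem is proved analytically, after Milnor and Rogers. Suppose that a `C¹` map `f` sends
the closed unit ball into its boundary sphere and fixes the sphere, and put `g x = f x - x`. For
small `t ≥ 0` the map `x ↦ x + t • g x` is a bijection of the ball onto itself, so the integral of
`det (1 + t • g')` over the ball equals the volume of the ball. This integral is a polynomial in
`t`, hence the equality persists at `t = 1`; but there the integrand is `det f' = 0`, because `f`
has values in the sphere. Smooth self-maps of the ball thus have fixed points, and continuous
self-maps of a compact convex set are uniform limits of smooth ones.

Nash equilibria are obtained from Brouwer's theorem through Ky Fan's inequality, applied to the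
function which sums the cost changes caused by all unilateral deviations. In the offloading game the
cost of a player is convex in their own strategy because it is a sum of terms `ℓ * d (ℓ + a)`, in
which the load `ℓ` is a nonnegative linear form and the delay `d` is convex and nondecreasing.
-/

open Set

section BallVolume

open Metric MeasureTheory Polynomial
open scoped NNReal Topology

variable {E : Type*} [NormedAddCommGroup E] [NormedSpace ℝ E]

theorem approximatesLinearOn_id_add_smul {g : E → E} {s : Set E} {K : ℝ≥0}
    (hg : LipschitzOnWith K g s) (t : ℝ) :
    ApproximatesLinearOn (fun x ↦ x + t • g x) (ContinuousLinearEquiv.refl ℝ E : E →L[ℝ] E) s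
      (‖t‖₊ * K) := by
  intro x hx y hy
  have hsub : x + t • g x - (y + t • g y) - (x - y) = t • (g x - g y) := by module
  simpa [hsub, norm_smul, mul_assoc] using
    mul_le_mul_of_nonneg_left (hg.norm_sub_le hx hy) (norm_nonneg t)

theorem subsingleton_or_lt_inv_nnnorm_refl_symm {c : ℝ≥0} (hc : c < 1) :
    Subsingleton E ∨ c < ‖((ContinuousLinearEquiv.refl ℝ E).symm : E →L[ℝ] E)‖₊⁻¹ := by
  rcases subsingleton_or_nontrivial E with hE | hE
  · exact .inl hE
  · right
    have : ‖((ContinuousLinearEquiv.refl ℝ E).symm : E →L[ℝ] E)‖₊ = 1 :=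
      ContinuousLinearMap.nnnorm_id
    rwa [this, inv_one]

theorem image_eq_self_of_approximatesLinearOn_refl [CompleteSpace E] {φ : E → E} {s : Set E}
    {c : ℝ≥0}
    (hφ : ApproximatesLinearOn φ (ContinuousLinearEquiv.refl ℝ E : E →L[ℝ] E) (closure s) c)
    (hc : c < 1) (hs : IsOpen s) (hconn : IsPreconnected s) (hcomp : IsCompact (closure s))
    (hmaps : MapsTo φ s s) (hfix : ∀ x ∈ frontier s, φ x = x) : φ '' s = s := by
  refine hmaps.image_subset.antisymm ?_
  rcases s.eq_empty_or_nonempty with rfl | hne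
  · simp
  have hopen : IsOpen (φ '' s) :=
    (hφ.mono_set subset_closure).open_image
      (ContinuousLinearEquiv.refl ℝ E).toNonlinearRightInverse hs
      (subsingleton_or_lt_inv_nnnorm_refl_symm hc)
  have hclosed : closure (φ '' s) ⊆ φ '' closure s :=
    closure_minimal (image_mono subset_closure)
      (hcomp.image_of_continuousOn hφ.continuousOn).isClosed
  refine hconn.subset_of_closure_inter_subset hopen ?_ ?_
  · rw [inter_eq_right.2 hmaps.image_subset]
    exact hne.image φ
  · rintro y ⟨hy, hys⟩
    obtain ⟨x, hx, rfl⟩ := hclosed hy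
    by_cases hxs : x ∈ s
    · exact mem_image_of_mem φ hxs
    · have hxf : x ∈ frontier s := ⟨hx, fun h => hxs (interior_subset h)⟩
      exact absurd (hfix x hxf ▸ hys) hxs

theorem det_one_add_pos [FiniteDimensional ℝ E] {A : E →L[ℝ] E} (hA : ‖A‖ < 1) :
    0 < (1 + A).det := by
  have hcont : ContinuousOn (fun s : ℝ ↦ (1 + s • A).det) (Icc 0 1) :=
    (ContinuousLinearMap.continuous_det.comp (by fun_prop)).continuousOn
  by_contra! h
  obtain ⟨s, hs, hzero⟩ : (0 : ℝ) ∈ (fun s : ℝ ↦ (1 + s • A).det) '' Icc 0 1 :=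
    intermediate_value_Icc' zero_le_one hcont ⟨by simpa using h, by simp [ContinuousLinearMap.det]⟩
  have hnorm : ‖-(s • A)‖ < 1 := by
    rw [norm_neg, norm_smul, Real.norm_of_nonneg hs.1]
    nlinarith [hs.2, norm_nonneg A]
  have hunit : IsUnit (1 + s • A) := by simpa using isUnit_one_sub_of_norm_lt_one hnorm
  have := (hunit.map (ContinuousLinearMap.toLinearMapRingHom)).map LinearMap.det
  exact this.ne_zero hzero

theorem exists_polynomial_eval_eq_det_one_add_smul [FiniteDimensional ℝ E] (A : E →L[ℝ] E) :
    ∃ p : ℝ[X], p.natDegree ≤ Module.finrank ℝ E ∧ ∀ t : ℝ, p.eval t = (1 + t • A).det := by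
  let b := Module.finBasis ℝ E
  let M := LinearMap.toMatrix b b (A : E →ₗ[ℝ] E)
  refine ⟨((X : ℝ[X]) • M.map C + (1 : Matrix _ _ ℝ).map C).det, ?_, fun t ↦ ?_⟩
  · simpa using natDegree_det_X_add_C_le M 1
  · rw [ContinuousLinearMap.det, ← LinearMap.det_toMatrix b, ← coe_evalRingHom, RingHom.map_det]
    congr 1
    ext i j
    simp [M, Matrix.one_apply, add_comm, mul_comm t, apply_ite (eval t),
      LinearMap.toMatrix_apply, b.repr_self, Finsupp.single_apply, eq_comm]

theorem integral_eval_eq_of_forall_Ioo {α : Type*} [MeasurableSpace α] {ν : Measure α}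
    {p : α → ℝ[X]} {n : ℕ} (hdeg : ∀ x, (p x).natDegree ≤ n)
    (hint : ∀ t, Integrable (fun x ↦ (p x).eval t) ν) {a b c : ℝ} (hab : a < b)
    (h : ∀ t ∈ Ioo a b, ∫ x, (p x).eval t ∂ν = c) (t : ℝ) : ∫ x, (p x).eval t ∂ν = c := by
  obtain ⟨s, hs, hcard⟩ := (Ioo_infinite hab).exists_subset_card_eq (n + 1)
  have hinterp (x : α) : (p x).eval t = ∑ u ∈ s, (p x).eval u * (Lagrange.basis s id u).eval t := by
    have hlt : (p x).degree < s.card := by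
      rw [hcard]
      exact degree_le_natDegree.trans_lt (by exact_mod_cast Nat.lt_succ_of_le (hdeg x))
    conv_lhs => rw [Lagrange.eq_interpolate (injOn_id _) hlt, Lagrange.interpolate_apply]
    simp [eval_finsetSum]
  calc ∫ x, (p x).eval t ∂ν
      = ∑ u ∈ s, (∫ x, (p x).eval u ∂ν) * (Lagrange.basis s id u).eval t := by
        simp_rw [hinterp]
        rw [integral_finsetSum _ fun u _ ↦ (hint u).mul_const _]
        simp_rw [integral_mul_const]
    _ = c * (∑ u ∈ s, Lagrange.basis s id u).eval t := by
        rw [eval_finsetSum, Finset.mul_sum]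
        exact Finset.sum_congr rfl fun u hu ↦ by rw [h u (hs hu)]
    _ = c := by
        rw [Lagrange.sum_basis (injOn_id _) (Finset.card_pos.1 (by omega)), eval_one, mul_one]

theorem setIntegral_det_one_add_smul_fderiv_eq [FiniteDimensional ℝ E] [MeasurableSpace E]
    [BorelSpace E] (ν : Measure E) [ν.IsAddHaarMeasure] {g : E → E} {s : Set E} {K : ℝ≥0} {t : ℝ}
    (hg : LipschitzOnWith K g (closure s)) (ht : ‖t‖₊ * K < 1) (hdiff : DifferentiableOn ℝ g s)
    (hs : IsOpen s) (hconn : IsPreconnected s) (hcomp : IsCompact (closure s))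
    (hmaps : MapsTo (fun x ↦ x + t • g x) s s) (hfix : ∀ x ∈ frontier s, g x = 0) :
    ∫ x in s, (1 + t • fderiv ℝ g x).det ∂ν = ν.real s := by
  have happrox := approximatesLinearOn_id_add_smul hg t
  have himage : (fun x ↦ x + t • g x) '' s = s :=
    image_eq_self_of_approximatesLinearOn_refl happrox ht hs hconn hcomp hmaps
      fun x hx ↦ by simp [hfix x hx]
  have hinj : InjOn (fun x ↦ x + t • g x) s :=
    (happrox.mono_set subset_closure).injOn (subsingleton_or_lt_inv_nnnorm_refl_symm ht)
  have hderiv (x : E) (hx : x ∈ s) :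
      HasFDerivWithinAt (fun x ↦ x + t • g x) (1 + t • fderiv ℝ g x) s x :=
    ((hasFDerivAt_id x).add ((hdiff.differentiableAt (hs.mem_nhds hx)).hasFDerivAt.const_smul
      t)).hasFDerivWithinAt
  have hpos (x : E) (hx : x ∈ s) : 0 < (1 + t • fderiv ℝ g x).det := by
    refine det_one_add_pos (lt_of_le_of_lt ?_ (NNReal.coe_lt_one.2 ht))
    rw [norm_smul, NNReal.coe_mul, coe_nnnorm]
    gcongr
    exact norm_fderiv_le_of_lipschitzOn ℝ (hs.mem_nhds hx) (hg.mono subset_closure)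
  calc ∫ x in s, (1 + t • fderiv ℝ g x).det ∂ν
      = ∫ x in s, |(1 + t • fderiv ℝ g x).det| • (1 : ℝ) ∂ν :=
        setIntegral_congr_fun hs.measurableSet fun x hx ↦ by simp [abs_of_pos (hpos x hx)]
    _ = ∫ _ in (fun x ↦ x + t • g x) '' s, (1 : ℝ) ∂ν :=
        (integral_image_eq_integral_abs_det_fderiv_smul ν hs.measurableSet hderiv hinj
          fun _ ↦ (1 : ℝ)).symm
    _ = ν.real s := by rw [himage]; simp

theorem integrableOn_det_one_add_smul_fderiv [MeasurableSpace E] [BorelSpace E] {ν : Measure E}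
    [IsFiniteMeasureOnCompacts ν] {g : E → E} {s : Set E} (hcomp : IsCompact (closure s))
    (hg : ∀ x ∈ closure s, ContDiffAt ℝ 1 g x) (t : ℝ) :
    IntegrableOn (fun x ↦ (1 + t • fderiv ℝ g x).det) s ν := by
  refine (ContinuousOn.integrableOn_compact hcomp fun x hx ↦ ?_).mono_set subset_closure
  have hcont : ContinuousAt (fun x ↦ 1 + t • fderiv ℝ g x) x :=
    continuousAt_const.add (((hg x hx).continuousAt_fderiv one_ne_zero).const_smul t)
  exact (ContinuousLinearMap.continuous_det.continuousAt.comp hcont).continuousWithinAt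

theorem setIntegral_det_fderiv_eq_of_frontier_fixed [FiniteDimensional ℝ E] [MeasurableSpace E]
    [BorelSpace E] (ν : Measure E) [ν.IsAddHaarMeasure] {f : E → E} {s : Set E} (hs : IsOpen s)
    (hconv : Convex ℝ s) (hbdd : Bornology.IsBounded s)
    (hf : ∀ x ∈ closure s, ContDiffAt ℝ 1 f x) (hmaps : MapsTo f s (closure s))
    (hfix : ∀ x ∈ frontier s, f x = x) : ∫ x in s, (fderiv ℝ f x).det ∂ν = ν.real s := by
  let g : E → E := fun x ↦ f x - x
  have hg (x : E) (hx : x ∈ closure s) : ContDiffAt ℝ 1 g x := (hf x hx).sub contDiffAt_id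
  obtain ⟨K, hK⟩ := ContDiffOn.exists_lipschitzOnWith
    (fun x hx ↦ (hg x hx).contDiffWithinAt) one_ne_zero hconv.closure hbdd.isCompact_closure
  have hsmall (t : ℝ) (ht : t ∈ Ioo (0 : ℝ) (1 / (K + 1))) :
      ∫ x in s, (1 + t • fderiv ℝ g x).det ∂ν = ν.real s := by
    have ht1 : t * (K + 1) < 1 := (lt_div_iff₀ (by positivity)).1 ht.2
    have htK : 0 ≤ t * K := mul_nonneg ht.1.le K.coe_nonneg
    refine setIntegral_det_one_add_smul_fderiv_eq ν hK ?_ ?_ hs hconv.isPreconnected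
      hbdd.isCompact_closure ?_ ?_
    · rw [← NNReal.coe_lt_one, NNReal.coe_mul, coe_nnnorm, Real.norm_of_nonneg ht.1.le]
      linarith [ht.1]
    · exact fun x hx ↦
        ((hg x (subset_closure hx)).differentiableAt one_ne_zero).differentiableWithinAt
    · intro x hx
      have hmem := hconv.combo_interior_closure_mem_interior (hs.interior_eq.symm ▸ hx) (hmaps hx)
        (by linarith [ht.1] : 0 < 1 - t) ht.1.le (sub_add_cancel 1 t)
      rw [hs.interior_eq] at hmem
      convert hmem using 1
      module
    · exact fun x hx ↦ by simp [g, hfix x hx]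
  choose p hdeg hp using fun x ↦ exists_polynomial_eval_eq_det_one_add_smul (fderiv ℝ g x)
  have hint (t : ℝ) : Integrable (fun x ↦ (p x).eval t) (ν.restrict s) := by
    simp_rw [hp]
    exact integrableOn_det_one_add_smul_fderiv hbdd.isCompact_closure hg t
  have hone := integral_eval_eq_of_forall_Ioo hdeg hint (by positivity : (0 : ℝ) < 1 / (K + 1))
    (fun t ht ↦ by simpa only [hp] using hsmall t ht) 1
  rw [← hone]
  refine setIntegral_congr_fun hs.measurableSet fun x hx ↦ ?_
  have hfx := (hf x (subset_closure hx)).differentiableAt one_ne_zero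
  have hfg : fderiv ℝ g x = fderiv ℝ f x - 1 := by
    rw [fderiv_fun_sub hfx differentiableAt_fun_id, fderiv_fun_id]; rfl
  simp only [hp, hfg, one_smul, add_sub_cancel]

end BallVolume

open Metric in
open scoped ContDiff Manifold Topology in
theorem exists_contDiff_forall_mem_forall_dist_lt {E F : Type*} [NormedAddCommGroup E]
    [NormedSpace ℝ E] [FiniteDimensional ℝ E] [NormedAddCommGroup F] [NormedSpace ℝ F] {f : E → F}
    {K : Set E} {C : Set F} (hK : IsClosed K) (hC : Convex ℝ C) (hne : C.Nonempty)
    (hf : ContinuousOn f K) (hmaps : MapsTo f K C) {ε : ℝ} (hε : 0 < ε) :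
    ∃ g : E → F, ContDiff ℝ ∞ g ∧ (∀ x, g x ∈ C) ∧ ∀ x ∈ K, dist (g x) (f x) < ε := by
  let t (x : E) : Set F := C ∩ ⋂ _ : x ∈ K, ball (f x) ε
  have ht (x : E) : Convex ℝ (t x) := hC.inter (convex_iInter fun _ ↦ convex_ball (f x) ε)
  have hlocal (x : E) : ∃ c, ∀ᶠ y in 𝓝 x, c ∈ t y := by
    by_cases hx : x ∈ K
    · refine ⟨f x, ?_⟩
      have hnear := (hf x hx).eventually (ball_mem_nhds (f x) hε)
      filter_upwards [eventually_nhdsWithin_iff.1 hnear] with y hy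
      exact ⟨hmaps hx, mem_iInter.2 fun hyK ↦ mem_ball_comm.1 (hy hyK)⟩
    · obtain ⟨c, hc⟩ := hne
      refine ⟨c, ?_⟩
      filter_upwards [hK.isOpen_compl.mem_nhds hx] with y hy
      exact ⟨hc, mem_iInter.2 fun hyK ↦ absurd hyK hy⟩
  obtain ⟨g, hg⟩ :=
    exists_contMDiffMap_forall_mem_convex_of_local_const 𝓘(ℝ, E) (n := (⊤ : ℕ∞)) ht hlocal
  exact ⟨g, g.contMDiff.contDiff, fun x ↦ (hg x).1, fun x hx ↦ mem_iInter.1 (hg x).2 hx⟩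

section Brouwer

open Metric MeasureTheory
open scoped Topology

variable {E : Type*} [NormedAddCommGroup E] [InnerProductSpace ℝ E]

theorem det_fderiv_eq_zero_of_norm_eq_one [FiniteDimensional ℝ E] {f : E → E} {x : E}
    (hf : DifferentiableAt ℝ f x) (hnorm : ∀ᶠ y in 𝓝 x, ‖f y‖ = 1) :
    (fderiv ℝ f x).det = 0 := by
  have horth (v : E) : inner ℝ (f x) (fderiv ℝ f x v) = 0 := by
    have hconst : (fun y ↦ ‖f y‖ ^ 2) =ᶠ[𝓝 x] fun _ ↦ 1 := by
      filter_upwards [hnorm] with y hy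
      rw [hy, one_pow]
    have hderiv := hf.hasFDerivAt.norm_sq.unique
      ((hasFDerivAt_const (1 : ℝ) x).congr_of_eventuallyEq hconst)
    simpa using congrArg (· v) hderiv
  by_contra hdet
  obtain ⟨v, hv⟩ : ∃ v, fderiv ℝ f x v = f x :=
    ((LinearMap.equivOfDetNeZero _ hdet).surjective (f x))
  have := horth v
  rw [hv, real_inner_self_eq_norm_sq, hnorm.self_of_nhds] at this
  norm_num at this

theorem exists_mem_sphere_ne_of_mapsTo_sphere [FiniteDimensional ℝ E] {f : E → E}
    (hf : ∀ x ∈ closedBall (0 : E) 1, ContDiffAt ℝ 1 f x)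
    (hmaps : MapsTo f (closedBall 0 1) (sphere 0 1)) : ∃ x ∈ sphere (0 : E) 1, f x ≠ x := by
  by_contra! hfix
  borelize E
  let ν : Measure E := Measure.addHaar
  have hnorm (x : E) (hx : x ∈ ball 0 1) : ‖f x‖ = 1 := by
    simpa using hmaps (ball_subset_closedBall hx)
  have hvol : ∫ x in ball 0 1, (fderiv ℝ f x).det ∂ν = ν.real (ball 0 1) := by
    apply setIntegral_det_fderiv_eq_of_frontier_fixed ν isOpen_ball (convex_ball 0 1) isBounded_ball
    · rwa [closure_ball 0 one_ne_zero]
    · rw [closure_ball 0 one_ne_zero]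
      exact (hmaps.mono_left ball_subset_closedBall).mono_right sphere_subset_closedBall
    · rwa [frontier_ball 0 one_ne_zero]
  have hzero : ∫ x in ball 0 1, (fderiv ℝ f x).det ∂ν = 0 :=
    setIntegral_eq_zero_of_forall_eq_zero fun x hx ↦ det_fderiv_eq_zero_of_norm_eq_one
      ((hf x (ball_subset_closedBall hx)).differentiableAt one_ne_zero)
      (Filter.eventually_of_mem (isOpen_ball.mem_nhds hx) hnorm)
  have hpos : 0 < ν.real (ball (0 : E) 1) :=
    ENNReal.toReal_pos (measure_ball_pos ν 0 one_pos).ne' measure_ball_lt_top.ne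
  linarith

/-- The point where the ray from `x` in the direction `u` leaves the closed unit ball, for `‖x‖ ≤ 1`
and `u ≠ 0`; its parameter is the larger root of `‖x + r • u‖ ^ 2 = 1`. With `u = x - f x` it turns
a fixed-point-free self-map `f` of the ball into a retraction onto the sphere. -/
noncomputable def sphereExit (x u : E) : E :=
  x + ((-inner ℝ x u + √(inner ℝ x u ^ 2 + ‖u‖ ^ 2 * (1 - ‖x‖ ^ 2))) / ‖u‖ ^ 2) • u

theorem norm_sphereExit {x u : E} (hx : ‖x‖ ≤ 1) (hu : u ≠ 0) : ‖sphereExit x u‖ = 1 := by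
  have hdisc : 0 ≤ inner ℝ x u ^ 2 + ‖u‖ ^ 2 * (1 - ‖x‖ ^ 2) := by
    have : ‖x‖ ^ 2 ≤ 1 := pow_le_one₀ (norm_nonneg x) hx
    nlinarith [sq_nonneg (inner ℝ x u), sq_nonneg ‖u‖]
  have hu' : ‖u‖ ≠ 0 := norm_ne_zero_iff.2 hu
  rw [← pow_eq_one_iff_of_nonneg (norm_nonneg _) two_ne_zero, sphereExit, norm_add_sq_real,
    inner_smul_right, norm_smul, mul_pow, Real.norm_eq_abs, sq_abs]
  field_simp
  linear_combination Real.sq_sqrt hdisc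

theorem sphereExit_eq_self {x u : E} (hx : ‖x‖ = 1) (hxu : 0 ≤ inner ℝ x u) :
    sphereExit x u = x := by
  simp [sphereExit, hx, Real.sqrt_sq hxu]

theorem inner_sub_pos_of_norm_eq_one {x y : E} (hx : ‖x‖ = 1) (hy : ‖y‖ ≤ 1) (hne : y ≠ x) :
    0 < inner ℝ x (x - y) := by
  have hdist : 0 < ‖x - y‖ ^ 2 := pow_pos (norm_pos_iff.2 (sub_ne_zero.2 hne.symm)) 2
  rw [norm_sub_sq_real, hx] at hdist
  rw [inner_sub_right, real_inner_self_eq_norm_sq, hx]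
  nlinarith [norm_nonneg y]

theorem sphereExit_discriminant_pos {x y : E} (hx : ‖x‖ ≤ 1) (hy : ‖y‖ ≤ 1) (hne : y ≠ x) :
    0 < inner ℝ x (x - y) ^ 2 + ‖x - y‖ ^ 2 * (1 - ‖x‖ ^ 2) := by
  rcases hx.lt_or_eq with hlt | heq
  · have hdist : 0 < ‖x - y‖ := norm_pos_iff.2 (sub_ne_zero.2 hne.symm)
    have hgap : 0 < 1 - ‖x‖ ^ 2 := sub_pos.2 (pow_lt_one₀ (norm_nonneg x) hlt two_ne_zero)
    positivity
  · rw [heq, one_pow, sub_self, mul_zero, add_zero]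
    exact pow_pos (inner_sub_pos_of_norm_eq_one heq hy hne) 2

theorem contDiffAt_sphereExit_sub {f : E → E} {x : E} (hf : ContDiffAt ℝ 1 f x) (hx : ‖x‖ ≤ 1)
    (hfx : ‖f x‖ ≤ 1) (hne : f x ≠ x) :
    ContDiffAt ℝ 1 (fun y ↦ sphereExit y (y - f y)) x := by
  have hid : ContDiffAt ℝ 1 (fun y : E ↦ y) x := contDiffAt_id
  have hu : ContDiffAt ℝ 1 (fun y ↦ y - f y) x := hid.sub hf
  have hinner : ContDiffAt ℝ 1 (fun y ↦ inner ℝ y (y - f y)) x := hid.inner ℝ hu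
  have hsqrt := ((hinner.pow 2).add ((hu.norm_sq ℝ).mul
    (contDiffAt_const.sub (hid.norm_sq ℝ)))).sqrt
    (sphereExit_discriminant_pos hx hfx hne).ne'
  exact hid.add (((hinner.neg.add hsqrt).div (hu.norm_sq ℝ)
    (pow_ne_zero 2 (norm_ne_zero_iff.2 (sub_ne_zero.2 hne.symm)))).smul hu)

theorem exists_mem_closedBall_fixedPoint_of_contDiffAt [FiniteDimensional ℝ E] {f : E → E}
    (hf : ∀ x ∈ closedBall (0 : E) 1, ContDiffAt ℝ 1 f x)
    (hmaps : MapsTo f (closedBall 0 1) (closedBall 0 1)) : ∃ x ∈ closedBall (0 : E) 1, f x = x := by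
  by_contra! hne
  have hnorm (x : E) (hx : x ∈ closedBall 0 1) : ‖x‖ ≤ 1 ∧ ‖f x‖ ≤ 1 :=
    ⟨mem_closedBall_zero_iff.1 hx, mem_closedBall_zero_iff.1 (hmaps hx)⟩
  obtain ⟨x, hx, hmoved⟩ := exists_mem_sphere_ne_of_mapsTo_sphere
    (f := fun x ↦ sphereExit x (x - f x))
    (fun x hx ↦ contDiffAt_sphereExit_sub (hf x hx) (hnorm x hx).1 (hnorm x hx).2 (hne x hx))
    (fun x hx ↦ mem_sphere_zero_iff_norm.2 <|
      norm_sphereExit (hnorm x hx).1 (sub_ne_zero.2 (hne x hx).symm))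
  have hx' := sphere_subset_closedBall hx
  have hx1 : ‖x‖ = 1 := mem_sphere_zero_iff_norm.1 hx
  exact hmoved <| sphereExit_eq_self hx1
    (inner_sub_pos_of_norm_eq_one hx1 (hnorm x hx').2 (hne x hx')).le

theorem exists_fixedPoint_of_contDiff_of_isBounded [FiniteDimensional ℝ E] {f : E → E}
    (hf : ContDiff ℝ 1 f) (hbdd : Bornology.IsBounded (range f)) : ∃ x, f x = x := by
  obtain ⟨R, hR, hfR⟩ := hbdd.exists_pos_norm_le
  obtain ⟨x, -, hx⟩ := exists_mem_closedBall_fixedPoint_of_contDiffAt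
    (f := fun x ↦ R⁻¹ • f (R • x))
    (fun x _ ↦ ((hf.comp (contDiff_id.const_smul R)).const_smul R⁻¹).contDiffAt) fun x _ ↦ by
      rw [mem_closedBall_zero_iff, norm_smul, norm_inv, Real.norm_of_nonneg hR.le]
      exact inv_mul_le_one_of_le₀ (hfR _ (mem_range_self _)) hR.le
  exact ⟨R • x, (inv_smul_eq_iff₀ hR.ne').1 hx⟩

theorem exists_fixedPoint_of_convex_of_isCompact_innerProductSpace [FiniteDimensional ℝ E]
    {f : E → E} {K : Set E} (hK : IsCompact K) (hconv : Convex ℝ K) (hne : K.Nonempty)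
    (hf : ContinuousOn f K) (hmaps : MapsTo f K K) : ∃ x ∈ K, f x = x := by
  obtain ⟨a, ha, hmin⟩ := hK.exists_isMinOn hne
    (continuous_dist.comp_continuousOn (hf.prodMk continuousOn_id))
  by_contra! hmoved
  obtain ⟨g, hg, hgK, hclose⟩ := exists_contDiff_forall_mem_forall_dist_lt hK.isClosed hconv hne
    hf hmaps (dist_pos.2 (hmoved a ha))
  obtain ⟨x, hx⟩ := exists_fixedPoint_of_contDiff_of_isBounded (hg.of_le (by simp))
    (hK.isBounded.subset (range_subset_iff.2 hgK))
  have hxK : x ∈ K := hx ▸ hgK x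
  have hlt := hclose x hxK
  rw [hx, dist_comm] at hlt
  exact hlt.not_ge (isMinOn_iff.1 hmin x hxK)

end Brouwer

theorem exists_fixedPoint_of_convex_of_isCompact {E : Type*} [AddCommGroup E] [TopologicalSpace E]
    [IsTopologicalAddGroup E] [T2Space E] [Module ℝ E] [ContinuousSMul ℝ E]
    [FiniteDimensional ℝ E] {f : E → E} {K : Set E} (hK : IsCompact K) (hconv : Convex ℝ K)
    (hne : K.Nonempty) (hf : ContinuousOn f K) (hmaps : MapsTo f K K) : ∃ x ∈ K, f x = x := by
  let e : E ≃L[ℝ] EuclideanSpace ℝ (Fin (Module.finrank ℝ E)) := toEuclidean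
  have hpre : MapsTo e.symm (e '' K) K := by
    rintro _ ⟨x, hx, rfl⟩
    rwa [e.symm_apply_apply]
  obtain ⟨_, ⟨x, hx, rfl⟩, hfx⟩ := exists_fixedPoint_of_convex_of_isCompact_innerProductSpace
    (f := e ∘ f ∘ e.symm) (hK.image e.continuous) (hconv.linear_image e.toLinearEquiv.toLinearMap)
    (hne.image e) (e.continuous.comp_continuousOn (hf.comp e.symm.continuous.continuousOn hpre))
    fun y hy ↦ mem_image_of_mem e (hmaps (hpre hy))
  exact ⟨x, hx, e.injective (by simpa using hfx)⟩

theorem exists_mem_stdSimplex_forall_nonpos_or_pos_of_pos {ι : Type*} [Fintype ι] [Nonempty ι]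
    {h : (ι → ℝ) → ι → ℝ} (hh : ContinuousOn h (stdSimplex ℝ ι)) :
    ∃ w ∈ stdSimplex ℝ ι, (∀ k, h w k ≤ 0) ∨ ∀ k, 0 < w k → 0 < h w k := by
  classical
  have hden (w : ι → ℝ) : 0 < 1 + ∑ k, (h w k)⁺ := by positivity
  have hcont (k : ι) : ContinuousOn (fun w ↦ (h w k)⁺) (stdSimplex ℝ ι) :=
    (continuousOn_pi.1 hh k).sup continuousOn_const
  obtain ⟨w, hw, hfix⟩ := exists_fixedPoint_of_convex_of_isCompact
    (f := fun w k ↦ (w k + (h w k)⁺) / (1 + ∑ l, (h w l)⁺))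
    (isCompact_stdSimplex ℝ ι) (convex_stdSimplex ℝ ι)
    ⟨_, single_mem_stdSimplex ℝ (Classical.arbitrary ι)⟩
    (continuousOn_pi.2 fun k ↦ ((continuous_apply k).continuousOn.add (hcont k)).div
      (continuousOn_const.add (continuousOn_finsetSum _ fun l _ ↦ hcont l)) fun w _ ↦ (hden w).ne')
    (fun w hw ↦ ⟨fun k ↦ div_nonneg (add_nonneg (hw.1 k) (posPart_nonneg _)) (hden w).le, by
      rw [← Finset.sum_div, Finset.sum_add_distrib, hw.2, div_self (hden w).ne']⟩)
  have hprop (k : ι) : w k * ∑ l, (h w l)⁺ = (h w k)⁺ := by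
    have := (div_eq_iff (hden w).ne').1 (congrFun hfix k)
    linear_combination -this
  refine ⟨w, hw, ?_⟩
  have hnonneg : 0 ≤ ∑ l, (h w l)⁺ := by positivity
  rcases hnonneg.eq_or_lt with hzero | hpos
  · exact .inl fun k ↦ posPart_eq_zero.1 (by rw [← hprop k, ← hzero, mul_zero])
  · exact .inr fun k hk ↦ posPart_pos_iff.1 (hprop k ▸ mul_pos hk hpos)

section KyFan

variable {E : Type*} [AddCommGroup E] [Module ℝ E] [TopologicalSpace E] [ContinuousAdd E]
  [ContinuousSMul ℝ E] {K : Set E} {Φ : E → E → ℝ}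

theorem exists_mem_forall_nonneg_of_quasiconvexOn_of_finite {ι : Type*} [Finite ι] [Nonempty ι]
    (hK : Convex ℝ K) (hcont : ∀ γ ∈ K, ContinuousOn (Φ · γ) K)
    (hconv : ∀ β ∈ K, QuasiconvexOn ℝ K (Φ β)) (hdiag : ∀ β ∈ K, 0 ≤ Φ β β) {γ : ι → E}
    (hγ : ∀ k, γ k ∈ K) : ∃ β ∈ K, ∀ k, 0 ≤ Φ β (γ k) := by
  have := Fintype.ofFinite ι
  let P (w : ι → ℝ) : E := ∑ k, w k • γ k
  have hP (w : ι → ℝ) (hw : w ∈ stdSimplex ℝ ι) : P w ∈ K :=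
    hK.sum_mem (fun k _ ↦ hw.1 k) hw.2 fun k _ ↦ hγ k
  have hPcont : Continuous P := by fun_prop
  obtain ⟨w, hw, hall | hpos⟩ := exists_mem_stdSimplex_forall_nonpos_or_pos_of_pos
    (h := fun w k ↦ -Φ (P w) (γ k))
    (continuousOn_pi.2 fun k ↦ ((hcont _ (hγ k)).comp hPcont.continuousOn hP).neg)
  · exact ⟨P w, hP w hw, fun k ↦ neg_nonpos.1 (hall k)⟩
  · have hbelow : P w ∈ {δ ∈ K | Φ (P w) δ < 0} := by
      have hsupp : P w = ∑ k with w k ≠ 0, w k • γ k :=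
        (Finset.sum_filter_of_ne fun k _ hk ↦ left_ne_zero_of_smul hk).symm
      have hmem := ((hconv _ (hP w hw)).convex_lt 0).sum_mem (fun k _ ↦ hw.1 k)
        ((Finset.sum_filter_ne_zero _).trans hw.2) fun k hk ↦ ⟨hγ k, neg_pos.1
          (hpos k ((hw.1 k).lt_of_ne' (Finset.mem_filter.1 hk).2))⟩
      rwa [← hsupp] at hmem
    exact absurd hbelow.2 (hdiag _ (hP w hw)).not_gt

theorem exists_mem_forall_nonneg_of_quasiconvexOn (hK : IsCompact K) (hconvK : Convex ℝ K)
    (hne : K.Nonempty) (hcont : ∀ γ ∈ K, ContinuousOn (Φ · γ) K)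
    (hconv : ∀ β ∈ K, QuasiconvexOn ℝ K (Φ β)) (hdiag : ∀ β ∈ K, 0 ≤ Φ β β) :
    ∃ β ∈ K, ∀ γ ∈ K, 0 ≤ Φ β γ := by
  by_contra! hno
  choose! g hgK hneg using hno
  obtain ⟨t, htK, hcover⟩ := hK.elim_nhdsWithin_subcover (fun β ↦ {z | Φ z (g β) < 0})
    fun β hβ ↦ (hcont _ (hgK β hβ) β hβ).eventually_lt continuousWithinAt_const (hneg β hβ)
  obtain ⟨β₀, hβ₀⟩ := hne
  obtain ⟨k₀, hk₀, -⟩ := mem_iUnion₂.1 (hcover hβ₀)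
  have : Nonempty t := ⟨k₀, hk₀⟩
  obtain ⟨β, hβ, hβg⟩ := exists_mem_forall_nonneg_of_quasiconvexOn_of_finite hconvK hcont hconv
    hdiag (γ := fun k : t ↦ g k) fun k ↦ hgK k (htK k k.2)
  obtain ⟨k, hk, hlt⟩ := mem_iUnion₂.1 (hcover hβ)
  exact (hβg ⟨k, hk⟩).not_gt hlt

end KyFan

theorem convexOn_finset_sum {F ι : Type*} [AddCommGroup F] [Module ℝ F] {s : Set F}
    (hs : Convex ℝ s) {f : ι → F → ℝ} {t : Finset ι} (hf : ∀ i ∈ t, ConvexOn ℝ s (f i)) :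
    ConvexOn ℝ s (fun x ↦ ∑ i ∈ t, f i x) := by
  classical
  induction t using Finset.induction_on with
  | empty => simpa using convexOn_const 0 hs
  | insert a t ha ih =>
    simp only [Finset.sum_insert ha]
    exact (hf a (Finset.mem_insert_self a t)).add
      (ih fun i hi ↦ hf i (Finset.mem_insert_of_mem hi))

section Nash

variable {ι : Type*} [DecidableEq ι] {E : ι → Type*}

/-- A strategy profile `β` is a Nash equilibrium of the game in which player `i` chooses a point of
`S i` so as to minimize the cost `C i`, if no player can lower their own cost by a unilateral
deviation. -/
def IsNashEquilibrium (S : ∀ i, Set (E i)) (C : ι → (∀ i, E i) → ℝ) (β : ∀ i, E i) : Prop :=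
  (∀ i, β i ∈ S i) ∧ ∀ i, ∀ b ∈ S i, C i β ≤ C i (Function.update β i b)

/-- The Nikaido–Isoda function of a cost game: the total change in cost when each player in turn
replaces their own strategy in `β` by the one in `γ`, the others keeping theirs. -/
def nikaidoIsoda [Fintype ι] (C : ι → (∀ i, E i) → ℝ) (β γ : ∀ i, E i) : ℝ :=
  ∑ i, (C i (Function.update β i (γ i)) - C i β)

variable {S : ∀ i, Set (E i)} {C : ι → (∀ i, E i) → ℝ}

theorem isNashEquilibrium_of_forall_nikaidoIsoda_nonneg [Fintype ι] {β : ∀ i, E i}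
    (hβ : β ∈ univ.pi S) (h : ∀ γ ∈ univ.pi S, 0 ≤ nikaidoIsoda C β γ) :
    IsNashEquilibrium S C β := by
  refine ⟨mem_univ_pi.1 hβ, fun i b hb ↦ ?_⟩
  have hdev := h _ (update_mem_pi_iff_of_mem hβ |>.2 fun _ ↦ hb)
  rw [nikaidoIsoda, Finset.sum_eq_single i (fun j _ hj ↦ by simp [hj]) (by simp)] at hdev
  simpa using hdev

theorem continuousOn_nikaidoIsoda_left [Fintype ι] [∀ i, TopologicalSpace (E i)]
    (hcont : ∀ i, ContinuousOn (C i) (univ.pi S)) {γ : ∀ i, E i} (hγ : γ ∈ univ.pi S) :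
    ContinuousOn (nikaidoIsoda C · γ) (univ.pi S) :=
  continuousOn_finsetSum _ fun i _ ↦
    ((hcont i).comp (continuous_id.update i continuous_const).continuousOn fun _ hβ ↦
      update_mem_pi_iff_of_mem hβ |>.2 fun _ ↦ mem_univ_pi.1 hγ i).sub (hcont i)

variable [∀ i, AddCommGroup (E i)] [∀ i, Module ℝ (E i)]

theorem convexOn_nikaidoIsoda_right [Fintype ι] (hS : ∀ i, Convex ℝ (S i))
    {β : ∀ i, E i} (hconv : ∀ i, ConvexOn ℝ (S i) (fun b ↦ C i (Function.update β i b))) :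
    ConvexOn ℝ (univ.pi S) (nikaidoIsoda C β) :=
  have hpi : Convex ℝ (univ.pi S) := convex_pi fun i _ ↦ hS i
  convexOn_finset_sum hpi fun i _ ↦
    (((hconv i).comp_linearMap (LinearMap.proj i)).subset (fun _ hγ ↦ mem_univ_pi.1 hγ i)
      hpi).sub (concaveOn_const _ hpi)

theorem exists_isNashEquilibrium [Finite ι] [∀ i, TopologicalSpace (E i)]
    [∀ i, ContinuousAdd (E i)] [∀ i, ContinuousSMul ℝ (E i)]
    (hcompact : ∀ i, IsCompact (S i)) (hS : ∀ i, Convex ℝ (S i)) (hne : ∀ i, (S i).Nonempty)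
    (hcont : ∀ i, ContinuousOn (C i) (univ.pi S))
    (hconv : ∀ i, ∀ β ∈ univ.pi S, ConvexOn ℝ (S i) (fun b ↦ C i (Function.update β i b))) :
    ∃ β, IsNashEquilibrium S C β := by
  have := Fintype.ofFinite ι
  obtain ⟨β, hβ, hmin⟩ := exists_mem_forall_nonneg_of_quasiconvexOn (Φ := nikaidoIsoda C)
    (isCompact_univ_pi hcompact) (convex_pi fun i _ ↦ hS i) (univ_pi_nonempty_iff.2 hne)
    (fun _ ↦ continuousOn_nikaidoIsoda_left hcont)
    (fun β hβ ↦ (convexOn_nikaidoIsoda_right hS fun i ↦ hconv i β hβ).quasiconvexOn)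
    fun β _ ↦ by simp [nikaidoIsoda]
  exact ⟨β, isNashEquilibrium_of_forall_nikaidoIsoda_nonneg hβ hmin⟩

end Nash

section CongestionDelay

/-- A per-task delay of a shared resource, as a function of its total load: it is nondecreasing,
convex and continuous on the range `[0, M]` of admissible loads. Nothing is asked of `d` outside
that range, where a queueing formula such as `V / (μ - x)` loses its meaning. -/
structure IsCongestionDelay (M : ℝ) (d : ℝ → ℝ) : Prop where
  monotoneOn : MonotoneOn d (Icc 0 M)
  convexOn : ConvexOn ℝ (Icc 0 M) d
  continuousOn : ContinuousOn d (Icc 0 M)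

theorem isCongestionDelay_div_sub_mul {M V μ τ : ℝ} (hV : 0 ≤ V) (hτ : 0 ≤ τ) (h : τ * M < μ) :
    IsCongestionDelay M (fun x ↦ V / (μ - τ * x)) := by
  have hpos (x : ℝ) (hx : x ∈ Icc 0 M) : 0 < μ - τ * x :=
    sub_pos.2 ((mul_le_mul_of_nonneg_left hx.2 hτ).trans_lt h)
  refine ⟨fun x _ y hy hxy ↦ ?_, ?_, ?_⟩
  · exact div_le_div_of_nonneg_left hV (hpos y hy) (by gcongr)
  · have hinv : ConvexOn ℝ (Icc 0 M) (fun x ↦ (μ + -τ * x) ^ (-1 : ℤ)) :=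
      (((convexOn_zpow (𝕜 := ℝ) (-1)).translate_right μ).comp_linearMap
        (LinearMap.mulLeft ℝ (-τ))).subset
        (fun x hx ↦ by simpa [← sub_eq_add_neg] using hpos x hx) (convex_Icc 0 M)
    simpa only [div_eq_mul_inv, smul_eq_mul, zpow_neg_one, neg_mul, ← sub_eq_add_neg]
      using hinv.smul hV
  · exact continuousOn_const.div (by fun_prop) fun x hx ↦ (hpos x hx).ne'

theorem isCongestionDelay_div_sub {M V μ : ℝ} (hV : 0 ≤ V) (h : M < μ) :
    IsCongestionDelay M (fun x ↦ V / (μ - x)) := by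
  simpa only [one_mul] using isCongestionDelay_div_sub_mul hV zero_le_one ((one_mul M).trans_lt h)

theorem convexOn_mul_delay_add {F : Type*} [AddCommGroup F] [Module ℝ F] {s : Set F} {M a : ℝ}
    {d : ℝ → ℝ} {ℓ : F → ℝ} (hd : IsCongestionDelay M d) (hs : Convex ℝ s) (hℓ : IsLinearMap ℝ ℓ)
    (hnonneg : ∀ x ∈ s, 0 ≤ ℓ x) (hload : ∀ x ∈ s, ℓ x + a ∈ Icc 0 M) :
    ConvexOn ℝ s (fun x ↦ ℓ x * d (ℓ x + a)) := by
  have hexcess : ConvexOn ℝ s (fun x ↦ d (ℓ x + a) - d 0) :=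
    (((hd.convexOn.translate_left a).comp_linearMap (hℓ.mk' ℓ)).subset
      (fun x hx ↦ by simpa only [mem_preimage, add_comm a] using! hload x hx) hs).sub
      (concaveOn_const _ hs)
  have hexcess_nonneg (x : F) (hx : x ∈ s) : 0 ≤ d (ℓ x + a) - d 0 :=
    sub_nonneg.2 (hd.monotoneOn ⟨le_rfl, (hload x hx).1.trans (hload x hx).2⟩ (hload x hx)
      (hload x hx).1)
  have hmono : MonovaryOn ℓ (fun x ↦ d (ℓ x + a) - d 0) s := fun x hx y hy hlt ↦ by
    by_contra! hyx
    exact hlt.not_ge (sub_le_sub_right (hd.monotoneOn (hload y hy) (hload x hx) (by gcongr)) _)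
  have hlin : ConvexOn ℝ s ℓ := (hℓ.mk' ℓ).convexOn hs
  have hbase : ConvexOn ℝ s (fun x ↦ ℓ x * d 0) := ((hℓ.mk' ℓ).smulRight (d 0)).convexOn hs
  exact ((hlin.mul hexcess hnonneg hexcess_nonneg hmono).add hbase).congr fun x _ ↦ by
    simp [mul_sub]

end CongestionDelay

section Offloading

variable {ι : Type*} [Fintype ι]

/-- The ways of splitting a workload `m` among the stations: entry `j` is the part sent to station
`j` (processed locally, if `j` is the owner of the workload). -/
def offloadingStrategies (m : ℝ) : Set (ι → ℝ) :=
  {b | (∀ j, 0 ≤ b j) ∧ ∑ j, b j = m}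

theorem convex_offloadingStrategies (m : ℝ) : Convex ℝ (offloadingStrategies (ι := ι) m) := by
  intro b hb c hc s t hs ht hst
  refine ⟨fun j ↦ ?_, ?_⟩
  · exact add_nonneg (mul_nonneg hs (hb.1 j)) (mul_nonneg ht (hc.1 j))
  · simp only [Pi.add_apply, Pi.smul_apply, smul_eq_mul, Finset.sum_add_distrib,
      ← Finset.mul_sum, hb.2, hc.2, ← add_mul, hst, one_mul]

theorem isCompact_offloadingStrategies (m : ℝ) : IsCompact (offloadingStrategies (ι := ι) m) := by
  refine (isCompact_univ_pi fun _ : ι ↦ isCompact_Icc (a := 0) (b := m)).of_isClosed_subset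
    ?_ fun b hb j _ ↦ ⟨hb.1 j, ?_⟩
  · exact (isClosed_Ici (a := (0 : ι → ℝ))).inter
      (isClosed_eq (by fun_prop : Continuous fun b : ι → ℝ ↦ ∑ j, b j) continuous_const)
  · exact hb.2 ▸ Finset.single_le_sum (fun k _ ↦ hb.1 k) (Finset.mem_univ j)

/-- The post-offloading workload `ω_j` of station `j` under the profile `β`. -/
def workload (β : ι → ι → ℝ) (j : ι) : ℝ :=
  ∑ k, β k j

variable {φ : ι → ℝ} {β : ι → ι → ℝ}

theorem workload_mem_Icc (hβ : β ∈ univ.pi fun i ↦ offloadingStrategies (φ i)) (j : ι) :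
    workload β j ∈ Icc 0 (∑ i, φ i) := by
  have hβ' (k : ι) : β k ∈ offloadingStrategies (φ k) := hβ k trivial
  refine ⟨Finset.sum_nonneg fun k _ ↦ (hβ' k).1 j, Finset.sum_le_sum fun k _ ↦ ?_⟩
  exact (hβ' k).2 ▸ Finset.single_le_sum (fun l _ ↦ (hβ' k).1 l) (Finset.mem_univ j)

variable [DecidableEq ι]

theorem single_mem_offloadingStrategies {m : ℝ} (hm : 0 ≤ m) (i : ι) :
    Pi.single i m ∈ offloadingStrategies (ι := ι) m :=
  ⟨fun j ↦ (Pi.single_nonneg.2 hm : (0 : ι → ℝ) ≤ Pi.single i m) j, by simp⟩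

/-- The part of the strategy `b` that its owner `i` hands over to the other stations. -/
def offloaded (i : ι) (b : ι → ℝ) : ℝ :=
  ∑ j ∈ Finset.univ.erase i, b j

/-- The total traffic `λ` in the local area network under the profile `β`. -/
def lanTraffic (β : ι → ι → ℝ) : ℝ :=
  ∑ k, offloaded k (β k)

/-- The cost of station `i` for processing delays `D j`, network delay `G` and energy prices `e j`;
station `i` pays `e i` only for the part of its own workload that it keeps. -/
def offloadingCost (D : ι → ℝ → ℝ) (G : ℝ → ℝ) (e : ι → ℝ) (i : ι) (β : ι → ι → ℝ) : ℝ :=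
  β i i * (D i (workload β i) + e i) +
    ∑ j ∈ Finset.univ.erase i, β i j * (D j (workload β j) + G (lanTraffic β))

theorem offloadingCost_eq (D : ι → ℝ → ℝ) (G : ℝ → ℝ) (e : ι → ℝ) (i : ι) (β : ι → ι → ℝ) :
    offloadingCost D G e i β = ∑ j, β i j * D j (workload β j) + β i i * e i +
      offloaded i (β i) * G (lanTraffic β) := by
  simp only [offloadingCost, offloaded, mul_add, Finset.sum_add_distrib, Finset.sum_mul,
    ← Finset.add_sum_erase Finset.univ (fun j ↦ β i j * D j (workload β j)) (Finset.mem_univ i)]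
  ring

theorem isLinearMap_offloaded (i : ι) : IsLinearMap ℝ (offloaded i) where
  map_add b c := by simp [offloaded, Finset.sum_add_distrib]
  map_smul _ _ := (Finset.mul_sum ..).symm

theorem offloaded_mem_Icc {m : ℝ} {b : ι → ℝ} (hb : b ∈ offloadingStrategies m) (i : ι) :
    offloaded i b ∈ Icc 0 m :=
  ⟨Finset.sum_nonneg fun j _ ↦ hb.1 j,
    hb.2 ▸ Finset.sum_le_univ_sum_of_nonneg hb.1⟩

theorem sum_apply_update {E : ι → Type*} {M : Type*} [AddCommMonoid M] (f : ∀ i, E i → M)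
    (β : ∀ i, E i) (i : ι) (b : E i) :
    ∑ k, f k (Function.update β i b k) = f i b + ∑ k ∈ Finset.univ.erase i, f k (β k) := by
  rw [← Finset.add_sum_erase _ _ (Finset.mem_univ i), Function.update_self]
  congr 1
  exact Finset.sum_congr rfl fun k hk ↦ by rw [Function.update_of_ne (Finset.ne_of_mem_erase hk)]

theorem workload_update (β : ι → ι → ℝ) (i : ι) (b : ι → ℝ) (j : ι) :
    workload (Function.update β i b) j = b j + ∑ k ∈ Finset.univ.erase i, β k j :=
  sum_apply_update (fun _ (c : ι → ℝ) ↦ c j) β i b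

theorem lanTraffic_update (β : ι → ι → ℝ) (i : ι) (b : ι → ℝ) :
    lanTraffic (Function.update β i b) =
      offloaded i b + ∑ k ∈ Finset.univ.erase i, offloaded k (β k) :=
  sum_apply_update offloaded β i b

theorem lanTraffic_mem_Icc (hβ : β ∈ univ.pi fun i ↦ offloadingStrategies (φ i)) :
    lanTraffic β ∈ Icc 0 (∑ i, φ i) :=
  ⟨Finset.sum_nonneg fun k _ ↦ (offloaded_mem_Icc (hβ k trivial) k).1,
    Finset.sum_le_sum fun k _ ↦ (offloaded_mem_Icc (hβ k trivial) k).2⟩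

variable {D : ι → ℝ → ℝ} {G : ℝ → ℝ}

theorem continuousOn_offloadingCost (hD : ∀ j, IsCongestionDelay (∑ i, φ i) (D j))
    (hG : IsCongestionDelay (∑ i, φ i) G) (e : ι → ℝ) (i : ι) :
    ContinuousOn (offloadingCost D G e i) (univ.pi fun i ↦ offloadingStrategies (φ i)) := by
  have hwork (j : ι) := (hD j).continuousOn.comp
    (by unfold workload; fun_prop : Continuous (workload · j)).continuousOn
    fun _ (hβ : _ ∈ univ.pi fun i ↦ offloadingStrategies (φ i)) ↦ workload_mem_Icc hβ j
  have hlan := hG.continuousOn.comp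
    (by unfold lanTraffic offloaded; fun_prop : Continuous (lanTraffic (ι := ι))).continuousOn
    fun _ (hβ : _ ∈ univ.pi fun i ↦ offloadingStrategies (φ i)) ↦ lanTraffic_mem_Icc hβ
  exact ((continuous_apply_apply i i).continuousOn.mul ((hwork i).add continuousOn_const)).add
    (continuousOn_finsetSum _ fun j _ ↦
      (continuous_apply_apply i j).continuousOn.mul ((hwork j).add hlan))

theorem convexOn_offloadingCost_update (hD : ∀ j, IsCongestionDelay (∑ i, φ i) (D j))
    (hG : IsCongestionDelay (∑ i, φ i) G) (e : ι → ℝ) (i : ι)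
    (hβ : β ∈ univ.pi fun i ↦ offloadingStrategies (φ i)) :
    ConvexOn ℝ (offloadingStrategies (φ i))
      (fun b ↦ offloadingCost D G e i (Function.update β i b)) := by
  have hS := convex_offloadingStrategies (ι := ι) (φ i)
  have hupdate (b : ι → ℝ) (hb : b ∈ offloadingStrategies (φ i)) :
      Function.update β i b ∈ univ.pi fun i ↦ offloadingStrategies (φ i) :=
    (update_mem_pi_iff_of_mem hβ).2 fun _ ↦ hb
  simp only [offloadingCost_eq, Function.update_self, workload_update, lanTraffic_update]
  refine ((convexOn_finset_sum hS fun j _ ↦ ?_).add ?_).add ?_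
  · exact convexOn_mul_delay_add (hD j) hS (LinearMap.proj j).isLinear (fun b hb ↦ hb.1 j)
      fun b hb ↦ workload_update β i b j ▸ workload_mem_Icc (hupdate b hb) j
  · exact (LinearMap.proj (R := ℝ) i |>.smulRight (e i)).convexOn hS
  · exact convexOn_mul_delay_add hG hS (isLinearMap_offloaded i)
      (fun b hb ↦ (offloaded_mem_Icc hb i).1)
      fun b hb ↦ lanTraffic_update β i b ▸ lanTraffic_mem_Icc (hupdate b hb)

theorem stmt_10_general (hφ : ∀ i, 0 ≤ φ i) (hD : ∀ j, IsCongestionDelay (∑ i, φ i) (D j))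
    (hG : IsCongestionDelay (∑ i, φ i) G) (e : ι → ℝ) :
    ∃ β, IsNashEquilibrium (fun i ↦ offloadingStrategies (φ i)) (offloadingCost D G e) β :=
  exists_isNashEquilibrium (fun i ↦ isCompact_offloadingStrategies (φ i))
    (fun i ↦ convex_offloadingStrategies (φ i))
    (fun i ↦ ⟨_, single_mem_offloadingStrategies (hφ i) i⟩)
    (continuousOn_offloadingCost hD hG e)
    fun i _ hβ ↦ convexOn_offloadingCost_update hD hG e i hβ

end Offloading

/-- the SBS peer offloading game admits at least one Nash
equilibrium (Theorem 3 of the paper). -/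
theorem stmt_10 (N : ℕ) (hN : 2 ≤ N) (V κ τ : ℝ) (hV : 0 < V) (hκ : 0 < κ) (hτ : 0 < τ)
    (φ μ q : Fin N → ℝ) (hφ : ∀ i, 0 ≤ φ i) (hμ : ∀ i, 0 < μ i) (hq : ∀ i, 0 ≤ q i)
    (hstab : ∀ j, (∑ i, φ i) < μ j) (hlan : τ * (∑ i, φ i) < 1)
    (B : Fin N → Set (Fin N → ℝ))
    (hB : B = fun i => {b | (∀ j, 0 ≤ b j) ∧ (∑ j, b j) = φ i})
    (Cost : Fin N → (Fin N → Fin N → ℝ) → ℝ)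
    (hCost : Cost = fun i β =>
      β i i * (V / (μ i - ∑ k, β k i) + κ * q i) +
      ∑ j ∈ Finset.univ.erase i, β i j *
        (V / (μ j - ∑ k, β k j) +
         V * τ / (1 - τ * (∑ k, ∑ l ∈ Finset.univ.erase k, β k l)))) :
    ∃ βNE : Fin N → Fin N → ℝ,
      (∀ i, βNE i ∈ B i) ∧
      ∀ i, ∀ b ∈ B i, Cost i βNE ≤ Cost i (Function.update βNE i b) := by
  subst hB hCost
  exact stmt_10_general hφ (fun j ↦ isCongestionDelay_div_sub hV.le (hstab j))
    (isCongestionDelay_div_sub_mul (mul_pos hV hτ).le hτ.le hlan) fun i ↦ κ * q i
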